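/- arXiv:1406.5836 — 2 statements merged into one kernel-verified Lean document; each statement's English description precedes it below -/
import Mathlib

section
/- Let E be a finite-dimensional real inner product space equipped with its Haar (Lebesgue) measure μ, let Z ⊆ E be a measurable set, and let f : E → ℝ vanish identically on Z. If f is differentiable at a point x ∈ Z which is a Lebesgue density point of Z (that is, μ(Z ∩ B(x,r))/μ(B(x,r)) → 1 as r → 0⁺), then fderiv ℝ f x = 0. (The key step in the proof of Lemma 2.1.) -/
/-!
If `L = fderiv ℝ f x` had `L v ≠ 0`, then for small `ε > 0` the open cone `{a | ε * ‖a‖ < |L a|}`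
would contain `v`, so its bounded part `t` would have positive measure. At a density point `x`,
the set `Z` meets the rescaled copies `x + r • t` for all small `r > 0`
(`Measure.eventually_nonempty_inter_smul_of_density_one`). At a common point `y`, both `f y` and
`f x` vanish, so differentiability gives `|L (y - x)| ≤ ε * ‖y - x‖`, whereas `y - x` lies in the
cone: a contradiction.
-/

open MeasureTheory Filter
open scoped Pointwise

/-- If `f` vanishes on a measurable set `Z` and is differentiable at a Lebesgue density
point `x` of `Z`, then the derivative of `f` at `x` vanishes. -/
theorem stmt_1 {E : Type*} [NormedAddCommGroup E] [InnerProductSpace ℝ E]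
    [FiniteDimensional ℝ E] [MeasurableSpace E] [BorelSpace E]
    (μ : Measure E) [μ.IsAddHaarMeasure]
    (Z : Set E) (hZ : MeasurableSet Z)
    (f : E → ℝ) (hfZ : ∀ z ∈ Z, f z = 0)
    (x : E) (hx : x ∈ Z)
    (hdens : Tendsto (fun r : ℝ => μ (Z ∩ Metric.closedBall x r) / μ (Metric.closedBall x r))
      (nhdsWithin 0 (Set.Ioi 0)) (nhds 1))
    (hdiff : DifferentiableAt ℝ f x) :
    fderiv ℝ f x = 0 := by
  by_contra hL
  obtain ⟨v, hv⟩ : ∃ v, fderiv ℝ f x v ≠ 0 := by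
    by_contra! h
    exact hL (ContinuousLinearMap.ext h)
  set L := fderiv ℝ f x
  have hLv : 0 < |L v| := abs_pos.2 hv
  -- An aperture for which the cone contains `v`, including when `‖v‖` is small.
  obtain ⟨ε, hε, hεv⟩ : ∃ ε > 0, ε * ‖v‖ < |L v| := by
    refine ⟨|L v| / (‖v‖ + 1), by positivity, ?_⟩
    rw [div_mul_eq_mul_div, div_lt_iff₀ (by positivity)]
    nlinarith
  let t : Set E := {a | ε * ‖a‖ < |L a|} ∩ Metric.ball 0 (‖v‖ + 1)
  have ht : IsOpen t :=
    (isOpen_lt (by fun_prop) (by fun_prop)).inter Metric.isOpen_ball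
  have htne : t.Nonempty := ⟨v, hεv, by simp⟩
  have hmeet : ∀ᶠ r in nhdsWithin (0 : ℝ) (Set.Ioi 0), (Z ∩ ({x} + r • t)).Nonempty :=
    Measure.eventually_nonempty_inter_smul_of_density_one μ Z x hdens t ht.measurableSet
      (ht.measure_pos μ htne).ne'
  have hnear : {y | ‖f y - f x - L (y - x)‖ ≤ ε * ‖y - x‖} ∈ nhds x :=
    hdiff.hasFDerivAt.isLittleO.def hε
  have hsub : ∀ᶠ r in nhdsWithin (0 : ℝ) (Set.Ioi 0),
      {x} + r • t ⊆ {y | ‖f y - f x - L (y - x)‖ ≤ ε * ‖y - x‖} :=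
    nhdsWithin_le_nhds
      (eventually_singleton_add_smul_subset (Metric.isBounded_ball.subset Set.inter_subset_right)
        hnear)
  obtain ⟨r, ⟨y, hyZ, hy⟩, hr, hr0⟩ := (hmeet.and (hsub.and self_mem_nhdsWithin)).exists
  have hr0 : 0 < r := hr0
  have hLy := hr hy
  obtain ⟨a, ha, rfl⟩ : ∃ a ∈ t, x + r • a = y := by
    obtain ⟨_, rfl, _, ⟨a, ha, rfl⟩, rfl⟩ := hy
    exact ⟨a, ha, rfl⟩
  -- Since `f` vanishes at both points, the estimate reads `|L (r • a)| ≤ ε * ‖r • a‖`.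
  simp only [Set.mem_ofPred_eq, hfZ _ hyZ, hfZ x hx, add_sub_cancel_left, sub_self, zero_sub,
    map_smul, norm_smul, Real.norm_eq_abs, abs_neg, smul_eq_mul, abs_mul, abs_of_pos hr0] at hLy
  have hcone : ε * ‖a‖ < |L a| := ha.1
  have := mul_lt_mul_of_pos_left hcone hr0
  linarith
end

section
/- Let E be a finite-dimensional real normed vector space, G a finite-dimensional real normed vector space, and ι : E → (G → ℝ) a linear map such that ι(φ) is infinitely differentiable for every φ ∈ E. Let K ⊆ G be compact and ε ∈ ℝ. Then the set U = {φ ∈ E | for all x ∈ K, if (ι φ)(x) = ε or (ι φ)(x) = −ε then fderiv ℝ (ι φ) x ≠ 0} of those φ for which ε is a regular value on K is open in E. (The openness claim of Lemma 3.1.) -/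
/-!
Expanding `φ` in a basis of `E` shows that `(φ, x) ↦ ι φ x` and `(φ, x) ↦ fderiv ℝ (ι φ) x` are
jointly continuous on `E × G`, as finite sums of products of a coordinate of `φ` with a continuous
function of `x`. The regularity condition is therefore open in `(φ, x)`, and by the tube lemma an
open condition on `E × G` that holds on `{φ} × K` with `K` compact holds on `V × K` for some
neighbourhood `V` of `φ`.
-/

theorem apply_eq_sum_basis {E G : Type*} [NormedAddCommGroup E] [NormedSpace ℝ E]
    [FiniteDimensional ℝ E] (ι : E →ₗ[ℝ] (G → ℝ)) (φ : E) :
    ι φ = ∑ i, (Module.finBasis ℝ E).repr φ i • ι (Module.finBasis ℝ E i) := by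
  conv_lhs => rw [← (Module.finBasis ℝ E).sum_repr φ]
  simp only [map_sum, map_smul]

theorem continuous_repr_finBasis {E : Type*} [NormedAddCommGroup E] [NormedSpace ℝ E]
    [FiniteDimensional ℝ E] (i : Fin (Module.finrank ℝ E)) :
    Continuous fun φ : E => (Module.finBasis ℝ E).repr φ i :=
  ((Module.finBasis ℝ E).coord i).continuous_of_finiteDimensional

theorem continuous_eval {E G : Type*} [NormedAddCommGroup E] [NormedSpace ℝ E]
    [FiniteDimensional ℝ E] [NormedAddCommGroup G]
    (ι : E →ₗ[ℝ] (G → ℝ)) (hcont : ∀ φ : E, Continuous (ι φ)) :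
    Continuous fun p : E × G => ι p.1 p.2 := by
  have h : (fun p : E × G => ι p.1 p.2) = fun p : E × G =>
      ∑ i, (Module.finBasis ℝ E).repr p.1 i • ι (Module.finBasis ℝ E i) p.2 := by
    funext p
    rw [apply_eq_sum_basis ι p.1]
    simp only [Finset.sum_apply, Pi.smul_apply]
  rw [h]
  exact continuous_finsetSum _ fun i _ =>
    ((continuous_repr_finBasis i).comp continuous_fst).smul ((hcont _).comp continuous_snd)

theorem continuous_fderiv_eval {E G : Type*} [NormedAddCommGroup E] [NormedSpace ℝ E]
    [FiniteDimensional ℝ E] [NormedAddCommGroup G] [NormedSpace ℝ G]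
    (ι : E →ₗ[ℝ] (G → ℝ)) (hC1 : ∀ φ : E, ContDiff ℝ 1 (ι φ)) :
    Continuous fun p : E × G => fderiv ℝ (ι p.1) p.2 := by
  have h : (fun p : E × G => fderiv ℝ (ι p.1) p.2) = fun p : E × G =>
      ∑ i, (Module.finBasis ℝ E).repr p.1 i • fderiv ℝ (ι (Module.finBasis ℝ E i)) p.2 := by
    funext p
    have hd : ∀ φ : E, DifferentiableAt ℝ (ι φ) p.2 := fun φ =>
      (hC1 φ).differentiable one_ne_zero p.2
    rw [apply_eq_sum_basis ι p.1, fderiv_sum fun i _ => (hd _).const_smul _]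
    exact Finset.sum_congr rfl fun i _ => fderiv_const_smul (hd _) _
  rw [h]
  exact continuous_finsetSum _ fun i _ =>
    ((continuous_repr_finBasis i).comp continuous_fst).smul
      (((hC1 _).continuous_fderiv one_ne_zero).comp continuous_snd)

/-- Openness of the set of `φ` for which `ε` is a regular value of `ι φ` on a compact set. -/
theorem stmt_6 {E G : Type*} [NormedAddCommGroup E] [NormedSpace ℝ E] [FiniteDimensional ℝ E]
    [NormedAddCommGroup G] [NormedSpace ℝ G] [FiniteDimensional ℝ G]
    (ι : E →ₗ[ℝ] (G → ℝ)) (hsmooth : ∀ φ : E, ContDiff ℝ (⊤ : ℕ∞) (ι φ))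
    (K : Set G) (hK : IsCompact K) (ε : ℝ) :
    IsOpen {φ : E | ∀ x ∈ K, (ι φ x = ε ∨ ι φ x = -ε) → fderiv ℝ (ι φ) x ≠ 0} := by
  have h0 := continuous_eval ι fun φ => (hsmooth φ).continuous
  have h1 := continuous_fderiv_eval ι fun φ => (hsmooth φ).of_le (by exact_mod_cast le_top)
  have hopen : IsOpen {p : E × G |
      (ι p.1 p.2 = ε ∨ ι p.1 p.2 = -ε) → fderiv ℝ (ι p.1) p.2 ≠ 0} := by
    have hclosed : IsClosed {p : E × G | ι p.1 p.2 = ε ∨ ι p.1 p.2 = -ε} :=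
      (isClosed_eq h0 continuous_const).union (isClosed_eq h0 continuous_const)
    have hne : IsOpen {p : E × G | fderiv ℝ (ι p.1) p.2 ≠ 0} :=
      isOpen_ne_fun h1 continuous_const
    simp only [imp_iff_not_or]
    exact hclosed.isOpen_compl.union hne
  rw [isOpen_iff_eventually]
  intro φ hφ
  exact hK.eventually_forall_of_forall_eventually fun x hx =>
    hopen.eventually_mem (show (φ, x) ∈ _ from hφ x hx)
end
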